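/- Let k be a field of characteristic p > 0 and F = (f₁,…,fₙ) ∈ k[X]^n. Then k[X] · j(F)^q ⊆ k[X^p][F], i.e. for every g ∈ k[X], the product g·j(F)^q lies in the subalgebra of k[X] generated by x₁^p,…,xₙ^p together with f₁,…,fₙ; here q = p^n(p−1)/2. -/

import Mathlib

open MvPolynomial

/-- The Jacobian of an `n`-tuple of polynomials in `n` variables. -/
noncomputable def jac {k : Type*} [CommRing k] {n : ℕ}
    (F : Fin n → MvPolynomial (Fin n) k) : MvPolynomial (Fin n) k :=
  (Matrix.of fun i j : Fin n => pderiv j (F i)).det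

/-! The ring `k[X]` is free over `k[X^p]` on the reduced monomials `X^a`, `0 ≤ a i < p`. Expanding
`F^a = ∑ b, M a b * X^b` with `M` over `k[X^p]`, Cramer's rule puts `det M * X^b` into `k[X^p][F]`,
so it is enough to show `det M = j(F)^q`. The Taylor expansion `f(X) ↦ f(X + Y)` fixes `k[X^p]`
modulo the `Y i ^ p`, so `det M` is also the determinant of the matrix of coefficients of the
products `F(X + Y)^a` at the reduced monomials in `Y`. Such determinants are multiplicative under
substitution. They depend only on the linear part in `Y`, here the Jacobian matrix of `F`, because
translations and terms of higher order act block triangularly with respect to the degree. For linear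
forms with matrix `J` they equal `(det J)^q`, as one sees on diagonal matrices and transvections;
`q` arises as the sum of the exponents of one variable over all reduced monomials. -/

open scoped Matrix

section ReducedMonomials

variable {σ R : Type*} [CommRing R] {p : ℕ}

/-- The exponent vector with entries `a i < p`, that is, the exponent of a monomial which is
reduced modulo the `p`-th powers of the variables. -/
noncomputable def reducedExp [Finite σ] (a : σ → Fin p) : σ →₀ ℕ :=
  Finsupp.equivFunOnFinite.symm fun i => (a i : ℕ)

/-- The reduced monomial `P ^ a = ∏ i, P i ^ a i` in the entries of the tuple `P`. -/
def reducedProd [Fintype σ] {A : Type*} [CommMonoid A] (P : σ → A) (a : σ → Fin p) : A :=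
  ∏ i, P i ^ (a i : ℕ)

variable (σ R p) in
/-- The ideal generated by the `p`-th powers of the variables. -/
noncomputable def powIdeal : Ideal (MvPolynomial σ R) :=
  Ideal.span (Set.range fun i => X i ^ p)

lemma reducedExp_injective [Finite σ] :
    Function.Injective (reducedExp : (σ → Fin p) → σ →₀ ℕ) := fun _ _ h =>
  funext fun i => Fin.ext (DFunLike.congr_fun h i)

lemma exists_reducedExp_eq [Finite σ] {m : σ →₀ ℕ} (hm : ∀ i, m i < p) :
    ∃ a : σ → Fin p, reducedExp a = m :=
  ⟨fun i => ⟨m i, hm i⟩, by ext; rfl⟩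

lemma map_reducedProd [Fintype σ] {A B G : Type*} [CommMonoid A] [CommMonoid B] [FunLike G A B]
    [MonoidHomClass G A B] (φ : G) (P : σ → A) (a : σ → Fin p) :
    φ (reducedProd P a) = reducedProd (fun i => φ (P i)) a := by
  simp only [reducedProd, map_prod, map_pow]

lemma reducedProd_X [Fintype σ] (a : σ → Fin p) :
    reducedProd (X : σ → MvPolynomial σ R) a = monomial (reducedExp a) 1 := by
  rw [monomial_eq, Finsupp.prod_fintype _ _ (by simp), C_1, one_mul]
  rfl

lemma X_pow_mem_powIdeal (i : σ) : X i ^ p ∈ powIdeal σ R p :=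
  Ideal.subset_span ⟨i, rfl⟩

lemma mem_powIdeal_iff [Finite σ] {f : MvPolynomial σ R} :
    f ∈ powIdeal σ R p ↔ ∀ a : σ → Fin p, coeff (reducedExp a) f = 0 := by
  have hspan : powIdeal σ R p =
      Ideal.span ((monomial · 1) '' Set.range fun i : σ => Finsupp.single i p) := by
    simp only [powIdeal, X_pow_eq_monomial, ← Set.range_comp, Function.comp_def]
  simp only [hspan, mem_ideal_span_monomial_image, Set.exists_range_iff, Finsupp.single_le_iff]
  constructor
  · intro hf a
    by_contra ha
    obtain ⟨i, hi⟩ := hf _ (mem_support_iff.2 ha)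
    exact (a i).2.not_ge hi
  · intro hf m hm
    by_contra! hlt
    obtain ⟨a, rfl⟩ := exists_reducedExp_eq hlt
    exact mem_support_iff.1 hm (hf a)

lemma coeff_reducedExp_eq_of_sub_mem [Finite σ] {f g : MvPolynomial σ R}
    (h : f - g ∈ powIdeal σ R p) (a : σ → Fin p) :
    coeff (reducedExp a) f = coeff (reducedExp a) g :=
  sub_eq_zero.1 (coeff_sub σ _ f g ▸ mem_powIdeal_iff.1 h a)

variable [Fintype σ] [DecidableEq σ]

lemma sub_sum_reducedProd_mem_powIdeal (f : MvPolynomial σ R) :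
    f - ∑ a : σ → Fin p, C (coeff (reducedExp a) f) * reducedProd X a ∈ powIdeal σ R p := by
  classical
  rw [mem_powIdeal_iff]
  intro b
  simp [coeff_sum, reducedProd_X, coeff_C_mul, coeff_monomial, reducedExp_injective.eq_iff]

lemma exists_eq_sum_expand_mul_reducedProd [NeZero p] (f : MvPolynomial σ R) :
    ∃ h : (σ → Fin p) → MvPolynomial σ R, f = ∑ a, expand p (h a) * reducedProd X a := by
  classical
  induction f using MvPolynomial.induction_on' with
  | add f g hf hg =>
    obtain ⟨u, hu⟩ := hf
    obtain ⟨v, hv⟩ := hg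
    refine ⟨u + v, ?_⟩
    simp only [Pi.add_apply, map_add, add_mul, Finset.sum_add_distrib, ← hu, ← hv]
  | monomial m r =>
    obtain ⟨b, hb⟩ := exists_reducedExp_eq (m := m.mapRange (· % p) (Nat.zero_mod p))
      fun i => Nat.mod_lt (m i) (NeZero.pos p)
    refine ⟨Pi.single b (monomial (m.mapRange (· / p) (Nat.zero_div p)) r), ?_⟩
    rw [Finset.sum_eq_single b (fun a _ ha => by simp [ha]) (by simp), Pi.single_eq_same,
      reducedProd_X, expand_monomial, monomial_mul, mul_one, hb]
    congr 2
    ext i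
    simp [Nat.div_add_mod]

end ReducedMonomials

section Substitution

variable {σ R : Type*} [CommRing R] {p : ℕ}

lemma mem_idealOfVars_of_constantCoeff_eq_zero {f : MvPolynomial σ R}
    (hf : constantCoeff f = 0) : f ∈ idealOfVars σ R := by
  rw [← pow_one (idealOfVars σ R), mem_pow_idealOfVars_iff']
  intro m hm
  rw [Nat.lt_one_iff, Finsupp.degree_eq_zero_iff] at hm
  rwa [hm]

lemma pow_mem_powIdeal [ExpChar R p] {f : MvPolynomial σ R} (hf : constantCoeff f = 0) :
    f ^ p ∈ powIdeal σ R p := by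
  have hmap := Ideal.mem_map_of_mem (frobenius (MvPolynomial σ R) p)
    (mem_idealOfVars_of_constantCoeff_eq_zero hf)
  rwa [Ideal.map_span, ← Set.range_comp] at hmap

lemma bind₁_mem_powIdeal [ExpChar R p] {τ : Type*} {Q : σ → MvPolynomial τ R}
    (hQ : ∀ i, constantCoeff (Q i) = 0) {f : MvPolynomial σ R} (hf : f ∈ powIdeal σ R p) :
    bind₁ Q f ∈ powIdeal τ R p := by
  suffices powIdeal σ R p ≤ (powIdeal τ R p).comap (bind₁ Q) from this hf
  rw [powIdeal, Ideal.span_le]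
  rintro _ ⟨i, rfl⟩
  simpa using pow_mem_powIdeal (hQ i)

variable [Fintype σ]

variable (p) in
/-- The matrix whose row `a` lists the coefficients of `P ^ a` at the reduced monomials. If the
entries of `P` have no constant term and `R` has characteristic `p`, it represents the
endomorphism `X i ↦ P i` of `R[X] / (X i ^ p)`, acting on row vectors. -/
noncomputable def truncMatrix (P : σ → MvPolynomial σ R) : Matrix (σ → Fin p) (σ → Fin p) R :=
  .of fun a b => coeff (reducedExp b) (reducedProd P a)

lemma truncMatrix_X : truncMatrix p (X : σ → MvPolynomial σ R) = 1 := by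
  classical
  ext a b
  simp [truncMatrix, reducedProd_X, coeff_monomial, Matrix.one_apply,
    reducedExp_injective.eq_iff]

lemma truncMatrix_map {S : Type*} [CommRing S] (φ : R →+* S) (P : σ → MvPolynomial σ R) :
    truncMatrix p (fun i => MvPolynomial.map φ (P i)) = (truncMatrix p P).map φ := by
  ext a b
  simp only [truncMatrix, Matrix.of_apply, Matrix.map_apply, ← map_reducedProd, coeff_map]

variable [DecidableEq σ]

lemma coeff_reducedExp_bind₁ [ExpChar R p] {Q : σ → MvPolynomial σ R}
    (hQ : ∀ i, constantCoeff (Q i) = 0) (f : MvPolynomial σ R) (c : σ → Fin p) :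
    coeff (reducedExp c) (bind₁ Q f) =
      ∑ b : σ → Fin p, coeff (reducedExp b) f * coeff (reducedExp c) (reducedProd Q b) := by
  have hmem := bind₁_mem_powIdeal hQ (sub_sum_reducedProd_mem_powIdeal (p := p) f)
  rw [map_sub] at hmem
  rw [coeff_reducedExp_eq_of_sub_mem hmem]
  simp [map_reducedProd, coeff_sum, coeff_C_mul]

lemma truncMatrix_bind₁ [ExpChar R p] (P : σ → MvPolynomial σ R) {Q : σ → MvPolynomial σ R}
    (hQ : ∀ i, constantCoeff (Q i) = 0) :
    truncMatrix p (fun i => bind₁ Q (P i)) = truncMatrix p P * truncMatrix p Q := by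
  ext a c
  simp only [truncMatrix, Matrix.mul_apply, Matrix.of_apply, ← map_reducedProd,
    coeff_reducedExp_bind₁ hQ]

end Substitution

section Weights

variable {σ R : Type*} [CommRing R] {p : ℕ}

variable (R) in
/-- The polynomials all of whose monomials have weight at least `d`. Weights are integers because
translations of the variables raise the weight only if the variables have negative weight. -/
noncomputable def weightGE (w : σ → ℤ) (d : ℤ) : Submodule R (MvPolynomial σ R) :=
  restrictSupport R {m | d ≤ Finsupp.weight w m}

/-- The polynomials `f` and `g` have no monomials of weight less than `d`, and the same part of
weight `d`. -/
def AgreeInWeight (w : σ → ℤ) (d : ℤ) (f g : MvPolynomial σ R) : Prop :=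
  g ∈ weightGE R w d ∧ f - g ∈ weightGE R w (d + 1)

variable {w : σ → ℤ} {d d' : ℤ} {f g f' g' : MvPolynomial σ R}

lemma mem_weightGE : f ∈ weightGE R w d ↔ ∀ m, coeff m f ≠ 0 → d ≤ Finsupp.weight w m := by
  simp [weightGE, mem_restrictSupport_iff, Set.subset_def]

lemma coeff_eq_zero_of_mem_weightGE (hf : f ∈ weightGE R w d) {m : σ →₀ ℕ}
    (hm : Finsupp.weight w m < d) : coeff m f = 0 :=
  not_not.1 fun h => hm.not_ge (mem_weightGE.1 hf m h)

lemma weightGE_antitone : Antitone (weightGE R w) := fun _ _ h =>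
  restrictSupport_mono _ fun _ => h.trans

lemma monomial_mem_weightGE {m : σ →₀ ℕ} (hm : d ≤ Finsupp.weight w m) (r : R) :
    monomial m r ∈ weightGE R w d :=
  (monomial_mem_restrictSupport R).2 (.inl hm)

lemma X_mem_weightGE (i : σ) : X i ∈ weightGE R w (w i) :=
  monomial_mem_weightGE (by simp [Finsupp.weight_single]) 1

lemma mul_mem_weightGE (hf : f ∈ weightGE R w d) (hg : g ∈ weightGE R w d') :
    f * g ∈ weightGE R w (d + d') := by
  have hmul := Submodule.mul_mem_mul hf hg
  rw [weightGE, weightGE, ← restrictSupport_add] at hmul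
  refine restrictSupport_mono _ ?_ hmul
  rintro _ ⟨u, hu, v, hv, rfl⟩
  simpa using add_le_add hu hv

namespace AgreeInWeight

lemma left_mem (h : AgreeInWeight w d f g) : f ∈ weightGE R w d := by
  simpa using add_mem h.1 (weightGE_antitone (Int.le_add_one le_rfl) h.2)

lemma one : AgreeInWeight w 0 (1 : MvPolynomial σ R) 1 :=
  ⟨monomial_mem_weightGE (by simp) 1, by simp⟩

lemma mul (h : AgreeInWeight w d f g) (h' : AgreeInWeight w d' f' g') :
    AgreeInWeight w (d + d') (f * f') (g * g') := by
  refine ⟨mul_mem_weightGE h.1 h'.1, ?_⟩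
  have hsplit : f * f' - g * g' = (f - g) * f' + g * (f' - g') := by ring
  rw [hsplit]
  refine add_mem ?_ ?_
  · simpa only [add_right_comm] using mul_mem_weightGE h.2 h'.left_mem
  · simpa only [add_assoc] using mul_mem_weightGE h.1 h'.2

lemma pow (h : AgreeInWeight w d f g) (k : ℕ) : AgreeInWeight w (k • d) (f ^ k) (g ^ k) := by
  induction k with
  | zero => simpa using one
  | succ k ih => simpa only [pow_succ, succ_nsmul] using ih.mul h

lemma prod {ι : Type*} (s : Finset ι) {d : ι → ℤ} {f g : ι → MvPolynomial σ R}
    (h : ∀ i, AgreeInWeight w (d i) (f i) (g i)) :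
    AgreeInWeight w (∑ i ∈ s, d i) (∏ i ∈ s, f i) (∏ i ∈ s, g i) := by
  classical
  induction s using Finset.induction_on with
  | empty => simpa using one
  | insert i s hi ih => simpa only [Finset.sum_insert hi, Finset.prod_insert hi] using (h i).mul ih

lemma reducedProd [Fintype σ] {P Q : σ → MvPolynomial σ R}
    (h : ∀ i, AgreeInWeight w (w i) (P i) (Q i)) (a : σ → Fin p) :
    AgreeInWeight w (Finsupp.weight w (reducedExp a)) (reducedProd P a) (reducedProd Q a) := by
  rw [Finsupp.weight_eq_sum]
  exact prod _ fun i => (h i).pow (a i)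

end AgreeInWeight

variable [Fintype σ] {P Q : σ → MvPolynomial σ R}

lemma blockTriangular_truncMatrix (hP : ∀ i, AgreeInWeight w (w i) (P i) (Q i)) :
    (truncMatrix p P).BlockTriangular fun a => Finsupp.weight w (reducedExp a) := fun a _ hab =>
  coeff_eq_zero_of_mem_weightGE (AgreeInWeight.reducedProd hP a).left_mem hab

variable [DecidableEq σ]

lemma det_truncMatrix_eq_of_agreeInWeight (h : ∀ i, AgreeInWeight w (w i) (P i) (Q i)) :
    (truncMatrix p P).det = (truncMatrix p Q).det := by
  have hQ : ∀ i, AgreeInWeight w (w i) (Q i) (Q i) := fun i => ⟨(h i).1, by simp⟩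
  rw [(blockTriangular_truncMatrix h).det, (blockTriangular_truncMatrix hQ).det]
  refine Finset.prod_congr rfl fun d _ => congrArg Matrix.det ?_
  ext ⟨a, ha⟩ ⟨b, hb⟩
  refine sub_eq_zero.1 ((coeff_sub σ _ _ _).symm.trans ?_)
  refine coeff_eq_zero_of_mem_weightGE (AgreeInWeight.reducedProd h a).2 ?_
  rw [ha, hb]
  exact Int.lt_succ d

lemma det_truncMatrix_eq_one_of_sub_X_mem (h : ∀ i, P i - X i ∈ weightGE R w (w i + 1)) :
    (truncMatrix p P).det = 1 := by
  rw [det_truncMatrix_eq_of_agreeInWeight fun i => ⟨X_mem_weightGE i, h i⟩, truncMatrix_X,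
    Matrix.det_one]

lemma det_truncMatrix_C_add_X (c : σ → R) : (truncMatrix p fun i => C (c i) + X i).det = 1 := by
  refine det_truncMatrix_eq_one_of_sub_X_mem (w := fun _ => -1) fun i => ?_
  rw [add_sub_cancel_right]
  exact monomial_mem_weightGE (by simp) (c i)

end Weights

section LinearForms

variable {σ R : Type*} [CommRing R] {p : ℕ}

/-- The matrix of coefficients of the linear terms of a tuple of polynomials. -/
noncomputable def linearPart (P : σ → MvPolynomial σ R) : Matrix σ σ R :=
  .of fun i j => coeff (Finsupp.single j 1) (P i)

variable [Fintype σ]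

lemma coeff_single_toMvPolynomial (J : Matrix σ σ R) (i j : σ) :
    coeff (Finsupp.single j 1) (J.toMvPolynomial i) = J i j := by
  classical
  simp [Matrix.toMvPolynomial, coeff_sum, coeff_monomial, Finsupp.single_left_inj]

lemma agreeInWeight_toMvPolynomial_linearPart {P : σ → MvPolynomial σ R}
    (hP : ∀ i, constantCoeff (P i) = 0) (i : σ) :
    AgreeInWeight (fun _ => 1) 1 (P i) ((linearPart P).toMvPolynomial i) := by
  refine ⟨sum_mem fun j _ => monomial_mem_weightGE (by simp [Finsupp.weight_single]) _,
    mem_weightGE.2 fun m hm => ?_⟩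
  have hweight : Finsupp.weight (fun _ => (1 : ℤ)) m = m.degree := by
    simp [Finsupp.weight_eq_sum, Finsupp.degree_eq_sum]
  rw [hweight]
  by_contra! hlt
  have hdeg : m.degree = 0 ∨ m.degree = 1 := by omega
  refine hm ?_
  rw [coeff_sub, sub_eq_zero]
  rcases hdeg with h0 | h1
  · rw [(Finsupp.degree_eq_zero_iff m).1 h0]
    exact (hP i).trans ((linearPart P).toMvPolynomial_constantCoeff i).symm
  · obtain ⟨j, rfl⟩ : m ∈ Set.range fun j : σ => Finsupp.single j 1 :=
      Finsupp.range_single_one ▸ h1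
    exact (coeff_single_toMvPolynomial (linearPart P) i j).symm

variable [DecidableEq σ]

lemma sum_reducedExp_apply (i : σ) :
    ∑ a : σ → Fin p, (a i : ℕ) = p ^ Fintype.card σ * (p - 1) / 2 := by
  have hrev : ∑ a : σ → Fin p, (a i : ℕ) = ∑ a : σ → Fin p, ((a i).rev : ℕ) :=
    (Equiv.sum_comp (Equiv.arrowCongr (Equiv.refl σ) Fin.revPerm)
      fun a : σ → Fin p => (a i : ℕ)).symm
  have hsum : ∑ a : σ → Fin p, ((a i : ℕ) + (a i).rev) = p ^ Fintype.card σ * (p - 1) := by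
    rw [Finset.sum_congr rfl fun a _ => show (a i : ℕ) + (a i).rev = p - 1 by grind]
    simp
  rw [Finset.sum_add_distrib, ← hrev] at hsum
  omega

lemma toMvPolynomial_diagonal (D : σ → R) (i : σ) :
    (Matrix.diagonal D).toMvPolynomial i = C (D i) * X i := by
  rw [Matrix.toMvPolynomial, Finset.sum_eq_single i] <;>
    simp +contextual [C_mul_X_eq_monomial, eq_comm]

lemma toMvPolynomial_transvection (i j : σ) (c : R) (l : σ) :
    (Matrix.transvection i j c).toMvPolynomial l = X l + if l = i then C c * X j else 0 := by
  rw [Matrix.transvection, Matrix.toMvPolynomial_add, Matrix.toMvPolynomial_one, Pi.add_apply,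
    Matrix.toMvPolynomial, Finset.sum_eq_single j] <;>
    simp +contextual [Matrix.single_apply, C_mul_X_eq_monomial, eq_comm, apply_ite]

lemma truncMatrix_toMvPolynomial_diagonal (D : σ → R) :
    truncMatrix p (Matrix.diagonal D).toMvPolynomial = Matrix.diagonal (reducedProd D) := by
  ext a b
  have hprod : reducedProd (fun i => C (D i) * X i) a =
      C (reducedProd D a) * reducedProd (X : σ → MvPolynomial σ R) a := by
    simp only [reducedProd, mul_pow, Finset.prod_mul_distrib, map_prod, map_pow]
  simp only [truncMatrix, Matrix.of_apply, _root_.funext (toMvPolynomial_diagonal D), hprod,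
    reducedProd_X, coeff_C_mul, coeff_monomial, Matrix.diagonal_apply,
    reducedExp_injective.eq_iff, mul_ite, mul_one, mul_zero]

lemma det_truncMatrix_toMvPolynomial_diagonal (D : σ → R) :
    (truncMatrix p (Matrix.diagonal D).toMvPolynomial).det =
      (Matrix.diagonal D).det ^ (p ^ Fintype.card σ * (p - 1) / 2) := by
  simp only [truncMatrix_toMvPolynomial_diagonal, Matrix.det_diagonal, reducedProd,
    ← Finset.prod_pow]
  rw [Finset.prod_comm]
  simp only [Finset.prod_pow_eq_pow_sum, sum_reducedExp_apply]

lemma det_truncMatrix_toMvPolynomial_transvection {i j : σ} (hij : i ≠ j) (c : R) :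
    (truncMatrix p (Matrix.transvection i j c).toMvPolynomial).det = 1 := by
  refine det_truncMatrix_eq_one_of_sub_X_mem (w := fun l => if l = j then 2 else 1) fun l => ?_
  rw [toMvPolynomial_transvection, add_sub_cancel_left]
  split_ifs with hj hi hi
  · exact absurd (hi.symm.trans hj) hij
  · exact zero_mem _
  · rw [C_mul_X_eq_monomial]
    exact monomial_mem_weightGE (by simp [Finsupp.weight_single]) c
  · exact zero_mem _

lemma truncMatrix_toMvPolynomial_mul [ExpChar R p] (A B : Matrix σ σ R) :
    truncMatrix p (A * B).toMvPolynomial =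
      truncMatrix p A.toMvPolynomial * truncMatrix p B.toMvPolynomial := by
  rw [← truncMatrix_bind₁ _ B.toMvPolynomial_constantCoeff]
  simp only [← Matrix.toMvPolynomial_mul]

lemma det_truncMatrix_toMvPolynomial_of_field {K : Type*} [Field K] [ExpChar K p]
    (J : Matrix σ σ K) :
    (truncMatrix p J.toMvPolynomial).det = J.det ^ (p ^ Fintype.card σ * (p - 1) / 2) := by
  induction J using Matrix.diagonal_transvection_induction with
  | hdiag D => exact det_truncMatrix_toMvPolynomial_diagonal D
  | htransvec t =>
    rw [t.det, one_pow]
    exact det_truncMatrix_toMvPolynomial_transvection t.hij t.c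
  | hmul A B hA hB =>
    rw [truncMatrix_toMvPolynomial_mul, Matrix.det_mul, hA, hB, Matrix.det_mul, mul_pow]

lemma det_truncMatrix_toMvPolynomial_map {S : Type*} [CommRing S] (φ : R →+* S)
    (J : Matrix σ σ R) :
    (truncMatrix p (φ.mapMatrix J).toMvPolynomial).det =
      φ (truncMatrix p J.toMvPolynomial).det := by
  rw [RingHom.map_det, RingHom.mapMatrix_apply, RingHom.mapMatrix_apply, ← truncMatrix_map]
  simp only [← Matrix.toMvPolynomial_map]

-- The identity is universal, so it follows from the case of the generic matrix over `ZMod p`,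
-- whose entries lie in a field.
lemma det_truncMatrix_toMvPolynomial [Fact p.Prime] [CharP R p] (J : Matrix σ σ R) :
    (truncMatrix p J.toMvPolynomial).det = J.det ^ (p ^ Fintype.card σ * (p - 1) / 2) := by
  let S := MvPolynomial (σ × σ) (ZMod p)
  let G : Matrix σ σ S := Matrix.mvPolynomialX σ σ (ZMod p)
  have hgeneric : (truncMatrix p G.toMvPolynomial).det =
      G.det ^ (p ^ Fintype.card σ * (p - 1) / 2) := by
    have hinj : Function.Injective (algebraMap S (FractionRing S)) := IsFractionRing.injective _ _
    have : CharP (FractionRing S) p := charP_of_injective_algebraMap hinj p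
    apply hinj
    rw [← det_truncMatrix_toMvPolynomial_map, det_truncMatrix_toMvPolynomial_of_field,
      ← RingHom.map_det, map_pow]
  let : Algebra (ZMod p) R := ZMod.algebra R p
  let φ : S →+* R := (aeval fun ij : σ × σ => J ij.1 ij.2 : S →ₐ[ZMod p] R)
  have hφ : φ.mapMatrix G = J := Matrix.mvPolynomialX_mapMatrix_aeval (ZMod p) J
  rw [← hφ, det_truncMatrix_toMvPolynomial_map, hgeneric, map_pow, RingHom.map_det]

lemma det_truncMatrix_of_constantCoeff_eq_zero [Fact p.Prime] [CharP R p]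
    {P : σ → MvPolynomial σ R} (hP : ∀ i, constantCoeff (P i) = 0) :
    (truncMatrix p P).det = (linearPart P).det ^ (p ^ Fintype.card σ * (p - 1) / 2) := by
  rw [det_truncMatrix_eq_of_agreeInWeight (agreeInWeight_toMvPolynomial_linearPart hP),
    det_truncMatrix_toMvPolynomial]

theorem det_truncMatrix [Fact p.Prime] [CharP R p] (P : σ → MvPolynomial σ R) :
    (truncMatrix p P).det = (linearPart P).det ^ (p ^ Fintype.card σ * (p - 1) / 2) := by
  let c : σ → R := fun i => constantCoeff (P i)
  let Q : σ → MvPolynomial σ R := fun i => P i - C (c i)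
  have hQ : ∀ i, constantCoeff (Q i) = 0 := fun i => by simp [Q, c]
  have hlin : linearPart Q = linearPart P := by
    ext i j
    simp [linearPart, Q, coeff_C, eq_comm]
  have hP : P = fun i => bind₁ Q (C (c i) + X i) := by
    funext i
    simp [Q]
  rw [← hlin, ← det_truncMatrix_of_constantCoeff_eq_zero hQ]
  conv_lhs => rw [hP, truncMatrix_bind₁ _ hQ, Matrix.det_mul, det_truncMatrix_C_add_X, one_mul]

end LinearForms

section Taylor

variable {σ R : Type*} [CommRing R] {p : ℕ}

variable (σ R) in
/-- The Taylor expansion `f(X) ↦ f(X + Y)`, as a polynomial in `Y` with coefficients in `R[X]`. -/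
noncomputable def taylorExpansion : MvPolynomial σ R →ₐ[R] MvPolynomial σ (MvPolynomial σ R) :=
  aeval fun i => C (X i) + X i

@[simp]
lemma taylorExpansion_X (i : σ) : taylorExpansion σ R (X i) = C (X i) + X i :=
  aeval_X _ i

lemma constantCoeff_taylorExpansion (f : MvPolynomial σ R) :
    constantCoeff (taylorExpansion σ R f) = f := by
  induction f using MvPolynomial.induction_on with
  | C r => simp
  | add f g hf hg => rw [map_add, map_add, hf, hg]
  | mul_X f i hf => rw [map_mul, map_mul, hf, taylorExpansion_X]; simp

lemma coeff_single_taylorExpansion (f : MvPolynomial σ R) (j : σ) :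
    coeff (Finsupp.single j 1) (taylorExpansion σ R f) = pderiv j f := by
  classical
  induction f using MvPolynomial.induction_on with
  | C r => simp [coeff_C, eq_comm]
  | add f g hf hg => rw [map_add, coeff_add, hf, hg, map_add]
  | mul_X f i hf =>
    have h0 : coeff 0 (taylorExpansion σ R f) = f := constantCoeff_taylorExpansion f
    rw [map_mul, taylorExpansion_X, mul_add, coeff_add, coeff_mul_X', mul_comm _ (C (X i)),
      coeff_C_mul, hf, pderiv_mul, pderiv_X]
    by_cases hij : i = j
    · subst hij
      simp [h0, mul_comm]
    · simp [hij, mul_comm]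

lemma linearPart_taylorExpansion (F : σ → MvPolynomial σ R) :
    linearPart (fun i => taylorExpansion σ R (F i)) = .of fun i j => pderiv j (F i) := by
  ext1 i j
  exact coeff_single_taylorExpansion (F i) j

lemma taylorExpansion_expand_sub_C_mem [ExpChar R p] (f : MvPolynomial σ R) :
    taylorExpansion σ R (expand p f) - C (expand p f) ∈ powIdeal σ (MvPolynomial σ R) p := by
  let π := Ideal.Quotient.mkₐ R (powIdeal σ (MvPolynomial σ R) p)
  let ι : MvPolynomial σ R →ₐ[R] MvPolynomial σ (MvPolynomial σ R) := IsScalarTower.toAlgHom R _ _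
  have hcomp : (π.comp (taylorExpansion σ R)).comp (expand p) = (π.comp ι).comp (expand p) := by
    refine algHom_ext fun i => (Ideal.Quotient.mk_eq_mk_iff_sub_mem _ _).2 ?_
    rw [RingHom.coe_coe, RingHom.coe_coe, expand_X, map_pow, map_pow, taylorExpansion_X,
      add_pow_expChar]
    simpa [ι, algebraMap_eq] using X_pow_mem_powIdeal i
  exact (Ideal.Quotient.mk_eq_mk_iff_sub_mem _ _).1 (DFunLike.congr_fun hcomp f)

variable [Fintype σ] [DecidableEq σ] {F : σ → MvPolynomial σ R}
  {M : Matrix (σ → Fin p) (σ → Fin p) (MvPolynomial σ R)}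

lemma truncMatrix_taylorExpansion [ExpChar R p]
    (hM : M.map (expand p) *ᵥ reducedProd X = reducedProd F) :
    truncMatrix p (fun i => taylorExpansion σ R (F i)) =
      M.map (expand p) * truncMatrix p fun i => C (X i) + X i := by
  ext1 a c
  simp only [truncMatrix, Matrix.mul_apply, Matrix.of_apply, ← map_reducedProd, ← hM,
    Matrix.mulVec, dotProduct, map_sum, coeff_sum, Matrix.map_apply, ← coeff_C_mul, map_mul]
  refine Finset.sum_congr rfl fun b _ => coeff_reducedExp_eq_of_sub_mem ?_ c
  simp only [map_reducedProd, taylorExpansion_X, ← sub_mul]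
  exact Ideal.mul_mem_right _ _ (taylorExpansion_expand_sub_C_mem (M a b))

lemma expand_det_eq_jacobian_pow [Fact p.Prime] [CharP R p]
    (hM : M.map (expand p) *ᵥ reducedProd X = reducedProd F) :
    expand p M.det =
      (Matrix.of fun i j => pderiv j (F i)).det ^ (p ^ Fintype.card σ * (p - 1) / 2) := by
  have hdet := congrArg Matrix.det (truncMatrix_taylorExpansion hM)
  rw [det_truncMatrix, linearPart_taylorExpansion, Matrix.det_mul, det_truncMatrix_C_add_X,
    mul_one] at hdet
  exact (AlgHom.map_det _ M).trans hdet.symm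

end Taylor

lemma expand_mem_adjoin {σ R : Type*} [CommRing R] (p : ℕ) (f : MvPolynomial σ R) :
    expand p f ∈ Algebra.adjoin R (Set.range fun i : σ => (X i : MvPolynomial σ R) ^ p) := by
  rw [Algebra.adjoin_range_eq_range_aeval]
  exact ⟨f, rfl⟩

lemma map_det_mul_eq_sum_adjugate {A B G ι : Type*} [CommRing A] [CommRing B] [FunLike G A B]
    [RingHomClass G A B] [Fintype ι] [DecidableEq ι] (φ : G) {M : Matrix ι ι A} {v w : ι → B}
    (h : M.map φ *ᵥ v = w) (i : ι) :
    φ M.det * v i = ∑ j, φ (M.adjugate i j) * w j := by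
  have hadj : M.adjugate.map φ * M.map φ = (φ M.det • 1 : Matrix ι ι B) := by
    rw [← Matrix.map_mul, Matrix.adjugate_mul, Matrix.map_smul' φ _ _ (map_mul φ),
      Matrix.map_one φ (map_zero φ) (map_one φ)]
  have hcramer : M.adjugate.map φ *ᵥ w = φ M.det • v := by
    rw [← h, Matrix.mulVec_mulVec, hadj, Matrix.smul_mulVec, Matrix.one_mulVec]
  exact (congrFun hcramer i).symm

theorem stmt11_general {k : Type*} [CommRing k] (p : ℕ) (hp : p.Prime) [CharP k p] (n : ℕ)
    (F : Fin n → MvPolynomial (Fin n) k) (g : MvPolynomial (Fin n) k) :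
    g * jac F ^ (p ^ n * (p - 1) / 2) ∈
      Algebra.adjoin k
        ((Set.range fun i : Fin n => (X i : MvPolynomial (Fin n) k) ^ p) ∪ Set.range F) := by
  have : Fact p.Prime := ⟨hp⟩
  set T := Algebra.adjoin k
    ((Set.range fun i : Fin n => (X i : MvPolynomial (Fin n) k) ^ p) ∪ Set.range F)
  have hexpand (f : MvPolynomial (Fin n) k) : expand p f ∈ T :=
    Algebra.adjoin_mono Set.subset_union_left (expand_mem_adjoin p f)
  have hF (a : Fin n → Fin p) : reducedProd F a ∈ T :=
    prod_mem fun i _ => pow_mem (Algebra.subset_adjoin (.inr ⟨i, rfl⟩)) _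
  choose M hM using fun a : Fin n → Fin p =>
    exists_eq_sum_expand_mul_reducedProd (p := p) (reducedProd F a)
  have hMF : (Matrix.of M).map (expand p) *ᵥ reducedProd X = reducedProd F :=
    funext fun a => (hM a).symm
  have hjac : expand p (Matrix.of M).det = jac F ^ (p ^ n * (p - 1) / 2) := by
    simpa only [Fintype.card_fin, jac] using expand_det_eq_jacobian_pow hMF
  obtain ⟨h, rfl⟩ := exists_eq_sum_expand_mul_reducedProd (p := p) g
  rw [← hjac, Finset.sum_mul]
  refine sum_mem fun b _ => ?_
  rw [mul_assoc, mul_comm (reducedProd X b), map_det_mul_eq_sum_adjugate _ hMF]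
  exact mul_mem (hexpand _) (sum_mem fun a _ => mul_mem (hexpand _) (hF a))

theorem stmt11 {k : Type*} [Field k] (p : ℕ) (hp : p.Prime) [CharP k p] (n : ℕ)
    (F : Fin n → MvPolynomial (Fin n) k) (g : MvPolynomial (Fin n) k) :
    g * jac F ^ (p ^ n * (p - 1) / 2) ∈
      Algebra.adjoin k
        ((Set.range fun i : Fin n => (X i : MvPolynomial (Fin n) k) ^ p) ∪ Set.range F) :=
  stmt11_general p hp n F g
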